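/- In the complex numbers, F(1/8,7/8) + 8i√2·F(7/8,9/8) = ζ₈·(2√2·F(3/8,5/8) + 4i·F(5/8,11/8)), where ζ₈ = e^{2πi/8}. -/

import Mathlib

/-- The Pochhammer symbol (x)_k = x(x+1)⋯(x+k−1). -/
noncomputable def poch (x : ℝ) (k : ℕ) : ℝ := ∏ i ∈ Finset.range k, (x + i)

/-- The hypergeometric series ₃F₂(a1,a2,a3;b1,b2;1). -/
noncomputable def threeF2 (a1 a2 a3 b1 b2 : ℝ) : ℝ :=
  ∑' k : ℕ, poch a1 k * poch a2 k * poch a3 k /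
    (poch b1 k * poch b2 k * (Nat.factorial k : ℝ))

/-- The Beta function B(a,b) = Γ(a)Γ(b)/Γ(a+b). -/
noncomputable def betaFn (a b : ℝ) : ℝ :=
  Real.Gamma a * Real.Gamma b / Real.Gamma (a + b)

/-- The normalized hypergeometric value
F(r,s) = (2^{1−4r}·B(r,s−r)/N(r)) · ₃F₂(1/2,1/2,r;1,s;1), where N(r) = 2·den(r). -/
noncomputable def Fval (r s : ℚ) : ℝ :=
  (2:ℝ) ^ ((1:ℝ) - 4 * (r:ℝ)) * betaFn (r:ℝ) ((s:ℝ) - (r:ℝ)) / (2 * (r.den : ℝ)) *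
    threeF2 (1/2) (1/2) (r:ℝ) 1 (s:ℝ)

section

open MeasureTheory Set

theorem HasSum.congr_term {ι : Type*} {f g : ι → ℝ} {a : ℝ} (h : HasSum f a)
    (e : ∀ i, g i = f i) : HasSum g a :=
  (funext e : g = f) ▸ h

theorem poch_succ (x : ℝ) (n : ℕ) : poch x (n + 1) = poch x n * (x + n) :=
  Finset.prod_range_succ _ _

theorem poch_pos {x : ℝ} (hx : 0 < x) (n : ℕ) : 0 < poch x n :=
  Finset.prod_pos fun _ _ => by positivity

theorem Gamma_add_nat {x : ℝ} (hx : 0 < x) (n : ℕ) :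
    Real.Gamma (x + n) = poch x n * Real.Gamma x := by
  induction n with
  | zero => simp [poch]
  | succ n ih =>
    rw [poch_succ, Nat.cast_succ, ← add_assoc, Real.Gamma_add_one (by positivity), ih]
    ring

theorem ringChoose_eq_poch_div (a : ℝ) (n : ℕ) :
    Ring.choose (a + n - 1) n = poch a n / n.factorial := by
  have h := Ring.factorial_nsmul_multichoose_eq_ascPochhammer a n
  have h2 : (ascPochhammer ℕ n).smeval a = poch a n := by
    rw [Polynomial.ascPochhammer_smeval_eq_eval]
    induction n with
    | zero => simp [poch]
    | succ n ih =>
      rw [poch_succ, ascPochhammer_succ_eval,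
        ih (Ring.factorial_nsmul_multichoose_eq_ascPochhammer a n)]
  rw [h2, nsmul_eq_mul] at h
  rw [Ring.choose, show a + n - 1 - n + 1 = a by ring, eq_div_iff (by positivity), ← h]
  ring

theorem hasSum_one_sub_rpow (a : ℝ) {x : ℝ} (hx : x ∈ Ioo (0 : ℝ) 1) :
    HasSum (fun n : ℕ => poch a n / n.factorial * x ^ n) ((1 - x) ^ (-a)) := by
  have h := (Real.one_div_one_sub_rpow_hasFPowerSeriesOnBall_zero a).hasSum
    (y := x) (by
      rw [← ENNReal.ofReal_one, Metric.eball_ofReal]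
      simpa [abs_of_pos hx.1] using hx.2)
  rw [zero_add, one_div, ← Real.rpow_neg (by linarith [hx.2])] at h
  refine h.congr_term fun n => ?_
  simp [ringChoose_eq_poch_div, mul_comm]

theorem lintegral_rpow_mul_one_sub_rpow {α β : ℝ} (hα : 0 < α) (hβ : 0 < β) :
    ∫⁻ x in Ioo (0 : ℝ) 1, ENNReal.ofReal (x ^ (α - 1) * (1 - x) ^ (β - 1)) =
      ENNReal.ofReal (Real.Gamma α * Real.Gamma β / Real.Gamma (α + β)) := by
  have hB := ProbabilityTheory.beta_pos hα hβ
  have h := ProbabilityTheory.lintegral_betaPDF_eq_one hα hβ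
  rw [ProbabilityTheory.lintegral_betaPDF] at h
  simp_rw [mul_assoc, ENNReal.ofReal_mul (one_div_pos.2 hB).le] at h
  rw [lintegral_const_mul' _ _ ENNReal.ofReal_ne_top] at h
  change _ = ENNReal.ofReal (ProbabilityTheory.beta α β)
  rw [one_div, ENNReal.ofReal_inv_of_pos hB] at h
  rw [mul_comm] at h
  rw [ENNReal.eq_inv_of_mul_eq_one_left h, inv_inv]

/-- A nonnegative series whose `ENNReal` sum is `ENNReal.ofReal s` has sum `s`. -/
theorem hasSum_of_tsum_ofReal {f : ℕ → ℝ} {s : ℝ} (hf : ∀ n, 0 ≤ f n) (hs : 0 ≤ s)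
    (h : ∑' n, ENNReal.ofReal (f n) = ENNReal.ofReal s) : HasSum f s := by
  have := ENNReal.hasSum_toReal (h ▸ ENNReal.ofReal_ne_top)
  rw [← ENNReal.tsum_toReal_eq fun _ => ENNReal.ofReal_ne_top, h] at this
  simpa [ENNReal.toReal_ofReal, hf, hs] using this

/-- Gauss's summation of `₂F₁(α, β; γ; 1)` for positive parameters. -/
theorem hasSum_gauss {α β γ : ℝ} (hα : 0 < α) (hβ : 0 < β) (h : 0 < γ - α - β) :
    HasSum (fun n : ℕ => poch α n / n.factorial * (Real.Gamma (β + n) / Real.Gamma (γ + n)))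
      (Real.Gamma β * Real.Gamma (γ - α - β) / (Real.Gamma (γ - α) * Real.Gamma (γ - β))) := by
  have hp := fun n => poch_pos hα n
  have hG : ∀ {x : ℝ}, 0 < x → 0 < Real.Gamma x := Real.Gamma_pos_of_pos
  have g1 := hG hβ
  have g2 := hG h
  have g3 := hG (show 0 < γ - α by linarith)
  have g4 := hG (show 0 < γ - β by linarith)
  have key : ∑' n : ℕ, ENNReal.ofReal (poch α n / n.factorial *
      (Real.Gamma (β + n) * Real.Gamma (γ - β) / Real.Gamma (γ + n))) =
      ENNReal.ofReal (Real.Gamma β * Real.Gamma (γ - α - β) / Real.Gamma (γ - α)) := by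
    have e1 := lintegral_rpow_mul_one_sub_rpow hβ h
    rw [show β + (γ - α - β) = γ - α by ring] at e1
    rw [← e1]
    have e2 : ∀ n : ℕ, ENNReal.ofReal (poch α n / n.factorial *
        (Real.Gamma (β + n) * Real.Gamma (γ - β) / Real.Gamma (γ + n))) =
        ∫⁻ x in Ioo (0 : ℝ) 1, ENNReal.ofReal (poch α n / n.factorial *
          (x ^ (β + n - 1) * (1 - x) ^ (γ - β - 1))) := by
      intro n
      have hc : 0 ≤ poch α n / n.factorial := by have := hp n; positivity
      have e3 := lintegral_rpow_mul_one_sub_rpow (α := β + n) (β := γ - β)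
        (by positivity) (by linarith)
      rw [show β + n + (γ - β) = γ + n by ring] at e3
      simp_rw [ENNReal.ofReal_mul hc]
      rw [lintegral_const_mul' _ _ ENNReal.ofReal_ne_top, e3]
    simp_rw [e2]
    rw [← lintegral_tsum fun n => by fun_prop]
    refine setLIntegral_congr_fun measurableSet_Ioo fun x hx => ?_
    have hx1 : 0 < 1 - x := by linarith [hx.2]
    have hx0 := hx.1
    have hs := (hasSum_one_sub_rpow α hx).mul_left (x ^ (β - 1) * (1 - x) ^ (γ - β - 1))
    have e4 : ∀ n : ℕ, x ^ (β - 1) * (1 - x) ^ (γ - β - 1) * (poch α n / n.factorial * x ^ n) =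
        poch α n / n.factorial * (x ^ (β + n - 1) * (1 - x) ^ (γ - β - 1)) := by
      intro n
      rw [show β + n - 1 = (β - 1) + n by ring, Real.rpow_add hx0, Real.rpow_natCast]
      ring
    replace hs := hs.congr_term fun n => (e4 n).symm
    rw [← ENNReal.ofReal_tsum_of_nonneg (fun n => by have := hp n; positivity) hs.summable,
      hs.tsum_eq, mul_assoc, ← Real.rpow_add hx1,
      show γ - β - 1 + -α = γ - α - β - 1 by ring]
  have hsum := (hasSum_of_tsum_ofReal (fun n => by
    have := hp n
    have := hG (show 0 < β + n by positivity)
    have := hG (show 0 < γ + n by have : (0:ℝ) ≤ n := n.cast_nonneg; linarith)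
    positivity) (by positivity) key).div_const (Real.Gamma (γ - β))
  rw [div_div] at hsum
  refine hsum.congr_term fun n => ?_
  field_simp

end

/-- The coefficients `(1-b)_n / n!` of the power series of `(1-t)^(b-1)`. -/
noncomputable def binomCoeff (b : ℝ) (n : ℕ) : ℝ := poch (1 - b) n / n.factorial

theorem binomCoeff_succ (b : ℝ) (n : ℕ) :
    binomCoeff b (n + 1) * (n + 1) = binomCoeff b n * (n + 1 - b) := by
  rw [binomCoeff, binomCoeff, poch_succ, Nat.factorial_succ]
  push_cast
  field_simp
  ring

theorem binomCoeff_pos {b : ℝ} (hb : b < 1) (n : ℕ) : 0 < binomCoeff b n := by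
  have := poch_pos (show 0 < 1 - b by linarith) n
  unfold binomCoeff
  positivity

theorem binomCoeff_le {b : ℝ} (hb0 : 0 < b) (hb : b < 1) (n : ℕ) :
    binomCoeff b n ≤ ((n : ℝ) + 1) ^ (-b) := by
  induction n with
  | zero => simp [binomCoeff, poch]
  | succ n ih =>
    have hn : (0 : ℝ) < n + 1 := by positivity
    have h1 : binomCoeff b (n + 1) = binomCoeff b n * (1 - b / (n + 1)) := by
      have := binomCoeff_succ b n
      field_simp
      linarith
    have hs : 0 < b / (n + 1 : ℝ) := by positivity
    have h2 := rpow_one_add_le_one_add_mul_self (s := 1 / (n + 1 : ℝ))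
      (by have : 0 < 1 / (n + 1 : ℝ) := by positivity
          linarith) hb0.le hb.le
    have h3 : (0 : ℝ) < (1 + 1 / (n + 1 : ℝ)) ^ b := by positivity
    have h4 : ((n + 1 : ℕ) : ℝ) + 1 = (n + 1) * (1 + 1 / (n + 1)) := by
      push_cast
      field_simp
    rw [h1, h4, Real.mul_rpow hn.le (by positivity)]
    have h5 : 1 - b / (n + 1) ≤ (1 + 1 / (n + 1 : ℝ)) ^ (-b) := by
      rw [Real.rpow_neg (by positivity), ← one_div, le_div_iff₀ h3]
      by_cases hneg : 0 ≤ 1 - b / (n + 1 : ℝ)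
      · calc (1 - b / (n + 1)) * (1 + 1 / (n + 1 : ℝ)) ^ b
            ≤ (1 - b / (n + 1)) * (1 + b * (1 / (n + 1))) := by gcongr
          _ = 1 - (b / (n + 1)) ^ 2 := by ring
          _ ≤ 1 := by nlinarith
      · nlinarith
    have := (binomCoeff_pos hb n).le
    have h6 : 0 ≤ ((n : ℝ) + 1) ^ (-b) := by positivity
    have h7 : (0 : ℝ) ≤ (1 + 1 / (n + 1 : ℝ)) ^ (-b) := by positivity
    calc _ ≤ binomCoeff b n * (1 + 1 / (n + 1 : ℝ)) ^ (-b) := by gcongr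
      _ ≤ _ := by gcongr

theorem summable_nat_add_one_rpow {p : ℝ} (hp : p < -1) :
    Summable fun n : ℕ => ((n : ℝ) + 1) ^ p := by
  have := (summable_nat_add_iff 1).2 (Real.summable_nat_rpow.2 hp)
  simpa using this

/-- Distance from a translate of a non-integer to the integers, with linear growth. -/
theorem exists_le_abs_add {y : ℝ} (hy : ∀ m : ℕ, y ≠ -m) :
    ∃ δ > 0, ∀ n : ℕ, δ * (n + 1) ≤ |y + n| := by
  have hpos : ∀ n : ℕ, 0 < |y + n| / ((n : ℝ) + 1) := fun n =>
    div_pos (abs_pos.2 fun h => hy n (by linarith)) (by positivity)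
  obtain ⟨N, hN⟩ := exists_nat_ge (2 * |y| + 1)
  obtain ⟨n₀, -, hmin⟩ := (Finset.range (N + 1)).exists_min_image
    (fun n : ℕ => |y + n| / ((n : ℝ) + 1)) ⟨0, by simp⟩
  refine ⟨min (|y + n₀| / ((n₀ : ℝ) + 1)) (1 / 4), lt_min (hpos _) (by norm_num), fun n => ?_⟩
  have hn : (0 : ℝ) < n + 1 := by positivity
  rw [← le_div_iff₀ hn]
  by_cases h : n ≤ N
  · exact (min_le_left _ _).trans (hmin n (by simpa [Nat.lt_succ_iff] using h))
  · refine (min_le_right _ _).trans ?_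
    rw [le_div_iff₀ hn]
    have h1 : (N : ℝ) ≤ n := by exact_mod_cast (not_le.1 h).le
    have h2 := le_abs_self (y + n)
    have h3 := neg_abs_le y
    have h4 := abs_nonneg y
    linarith

theorem summable_binomCoeff_div {b y : ℝ} (hb0 : 0 < b) (hb : b < 1) (hy : ∀ m : ℕ, y ≠ -m) :
    Summable fun n : ℕ => binomCoeff b n / (y + n) := by
  obtain ⟨δ, hδ, h⟩ := exists_le_abs_add hy
  refine Summable.of_norm_bounded
    ((summable_nat_add_one_rpow (p := -b - 1) (by linarith)).mul_left (1 / δ)) fun n => ?_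
  have hn : (0 : ℝ) < n + 1 := by positivity
  rw [norm_div, Real.norm_eq_abs, Real.norm_eq_abs, abs_of_pos (binomCoeff_pos hb n),
    Real.rpow_sub_one hn.ne']
  calc binomCoeff b n / |y + n| ≤ ((n : ℝ) + 1) ^ (-b) / (δ * (n + 1)) := by
        gcongr
        · exact binomCoeff_le hb0 hb n
        · exact h n
    _ = _ := by field_simp

/-- The partial fraction expansion of the Beta function, `B(y,b) = ∑ (1-b)_n / (n! (y+n))`. -/
theorem hasSum_binomCoeff_div {b : ℝ} (hb0 : 0 < b) (hb : b < 1) {y : ℝ} (hy : ∀ m : ℕ, y ≠ -m) :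
    HasSum (fun n : ℕ => binomCoeff b n / (y + n))
      (Real.Gamma y * Real.Gamma b / Real.Gamma (y + b)) := by
  have main : ∀ N : ℕ, ∀ y : ℝ, (∀ m : ℕ, y ≠ -m) → 0 < y + N →
      HasSum (fun n : ℕ => binomCoeff b n / (y + n))
        (Real.Gamma y * Real.Gamma b / Real.Gamma (y + b)) := by
    intro N
    induction N with
    | zero =>
      intro y _ hpos
      have hy0 : 0 < y := by simpa using hpos
      have h := hasSum_gauss (α := 1 - b) (β := y) (γ := y + 1) (by linarith) hy0 (by linarith)
      rw [show y + 1 - (1 - b) - y = b by ring, show y + 1 - (1 - b) = y + b by ring,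
        show y + 1 - y = 1 by ring, Real.Gamma_one, mul_one] at h
      refine h.congr_term fun n => ?_
      have hp : 0 < y + n := by positivity
      rw [show y + 1 + n = y + n + 1 by ring, Real.Gamma_add_one hp.ne', binomCoeff]
      have := Real.Gamma_pos_of_pos hp
      field_simp
    | succ N ih =>
      intro y hy hpos
      have hy0 : y ≠ 0 := by simpa using hy 0
      have hy1 : ∀ m : ℕ, y + 1 ≠ -m := fun m h => hy (m + 1) (by push_cast; linarith)
      have hne : ∀ n : ℕ, y + n ≠ 0 := fun n h => hy n (by linarith)
      have h1 := ih (y + 1) hy1 (by push_cast at hpos; linarith)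
      have hs := summable_binomCoeff_div hb0 hb hy
      have h2 := (hs.hasSum.mul_left y).sub (h1.mul_left (y + b))
      have h3 : ∀ M : ℕ, ∑ n ∈ Finset.range M, (y * (binomCoeff b n / (y + n)) -
          (y + b) * (binomCoeff b n / (y + 1 + n))) = M * (binomCoeff b M / (y + M)) := by
        intro M
        induction M with
        | zero => simp
        | succ M ihM =>
          rw [Finset.sum_range_succ, ihM]
          have e1 := hne M
          have e2 := hne (M + 1)
          have e3 := binomCoeff_succ b M
          push_cast at e2 ⊢
          have e4 : y + 1 + M ≠ 0 := by convert e2 using 1; ring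
          have e5 : ((M : ℝ) + 1) * (binomCoeff b (M + 1) / (y + (M + 1))) =
              (binomCoeff b M * (M + 1 - b)) / (y + 1 + M) := by
            rw [← e3, show y + ((M : ℝ) + 1) = y + 1 + M by ring]
            ring
          rw [e5]
          field_simp
          ring
      have h4 : Filter.Tendsto (fun M : ℕ => (M : ℝ) * (binomCoeff b M / (y + M)))
          Filter.atTop (nhds 0) := by
        obtain ⟨δ, hδ, hd⟩ := exists_le_abs_add hy
        have h5 : Filter.Tendsto (fun M : ℕ => 1 / δ * ((M : ℝ) + 1) ^ (-b))
            Filter.atTop (nhds 0) := by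
          have := ((tendsto_rpow_neg_atTop hb0).comp
            ((tendsto_natCast_atTop_atTop (R := ℝ)).atTop_add
              (tendsto_const_nhds (x := (1 : ℝ))))).const_mul (1 / δ)
          simpa [Function.comp_def] using this
        refine squeeze_zero_norm (fun M => ?_) h5
        have hM : (0 : ℝ) < M + 1 := by positivity
        rw [norm_mul, norm_div, Real.norm_natCast, Real.norm_eq_abs, Real.norm_eq_abs,
          abs_of_pos (binomCoeff_pos hb M)]
        calc M * (binomCoeff b M / |y + M|)
            ≤ (M + 1) * (((M : ℝ) + 1) ^ (-b) / (δ * (M + 1))) := by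
              have := (binomCoeff_pos hb M).le
              gcongr
              · linarith
              · exact binomCoeff_le hb0 hb M
              · exact hd M
          _ = _ := by field_simp
      have h6 := tendsto_nhds_unique h2.tendsto_sum_nat (by simpa only [h3] using h4)
      have h7 : ∑' n : ℕ, binomCoeff b n / (y + n) =
          Real.Gamma y * Real.Gamma b / Real.Gamma (y + b) := by
        have e1 : (y + b) * (Real.Gamma (y + 1) * Real.Gamma b / Real.Gamma (y + 1 + b)) =
            y * (Real.Gamma y * Real.Gamma b / Real.Gamma (y + b)) := by
          rw [Real.Gamma_add_one hy0]
          by_cases hyb : y + b = 0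
          · simp [hyb]
          · rw [show y + 1 + b = y + b + 1 by ring, Real.Gamma_add_one hyb]
            field_simp
        rw [e1] at h6
        exact mul_left_cancel₀ hy0 (by linarith)
      exact h7 ▸ hs.hasSum
  obtain ⟨N, hN⟩ := exists_nat_gt (-y)
  exact main N y hy (by linarith)

theorem binomCoeff_half_le_one (n : ℕ) : binomCoeff (1 / 2) n ≤ 1 :=
  (binomCoeff_le (by norm_num) (by norm_num) n).trans
    (Real.rpow_le_one_of_one_le_of_nonpos (by simp) (by norm_num))

theorem binomCoeff_half_pos (n : ℕ) : 0 < binomCoeff (1 / 2) n :=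
  binomCoeff_pos (by norm_num) n

theorem binomCoeff_half_sq_le (n : ℕ) : binomCoeff (1 / 2) n ^ 2 ≤ ((n : ℝ) + 1)⁻¹ := by
  have hn : (0 : ℝ) ≤ n + 1 := by positivity
  calc binomCoeff (1 / 2) n ^ 2 ≤ (((n : ℝ) + 1) ^ (-(1 / 2 : ℝ))) ^ 2 := by
        have := (binomCoeff_half_pos n).le
        gcongr
        exact binomCoeff_le (by norm_num) (by norm_num) n
    _ = _ := by
        rw [← Real.rpow_natCast, ← Real.rpow_mul hn, ← Real.rpow_neg_one]
        norm_num

theorem beta_nat_add_half (n : ℕ) :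
    Real.Gamma (n + 1 / 2) * Real.Gamma (1 / 2) / Real.Gamma (n + 1 / 2 + 1 / 2) =
      Real.pi * binomCoeff (1 / 2) n := by
  rw [add_comm (n : ℝ), Gamma_add_nat (by norm_num), show (1 / 2 : ℝ) + n + 1 / 2 = n + 1 by ring,
    Real.Gamma_nat_eq_factorial, binomCoeff, Real.Gamma_one_half_eq,
    mul_assoc, Real.mul_self_sqrt Real.pi_pos.le, show (1 : ℝ) - 1 / 2 = 1 / 2 by norm_num]
  ring

theorem hasSum_binomCoeff_half_kernel {y : ℝ} (hy : ∀ m : ℕ, y ≠ -m) :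
    ∃ s, HasSum (fun p : ℕ × ℕ => binomCoeff (1 / 2) p.1 * binomCoeff (1 / 2) p.2 /
        ((p.1 + p.2 + 1 / 2) * (y + p.1))) s ∧
      HasSum (fun n : ℕ => Real.pi * (binomCoeff (1 / 2) n ^ 2 / (y + n))) s := by
  set u := binomCoeff (1 / 2) with hu
  have hu0 : ∀ n, 0 < u n := binomCoeff_half_pos
  have inner : ∀ n : ℕ, HasSum (fun m : ℕ => u m / ((n + 1 / 2 : ℝ) + m)) (Real.pi * u n) := by
    intro n
    rw [hu, ← beta_nat_add_half]
    refine hasSum_binomCoeff_div (by norm_num) (by norm_num) fun m h => ?_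
    have : (0 : ℝ) ≤ m := m.cast_nonneg
    have : (0 : ℝ) ≤ n := n.cast_nonneg
    linarith
  have hfib : ∀ n : ℕ, HasSum (fun m : ℕ => u n * u m / ((n + m + 1 / 2) * (y + n)))
      (Real.pi * (u n ^ 2 / (y + n))) := by
    intro n
    have h := (inner n).mul_left (u n / (y + n))
    rw [show u n / (y + n) * (Real.pi * u n) = Real.pi * (u n ^ 2 / (y + n)) by ring] at h
    refine h.congr_term fun m => ?_
    rw [show (n : ℝ) + 1 / 2 + m = n + m + 1 / 2 by ring, div_mul_div_comm]
    ring
  have hsum : Summable (fun p : ℕ × ℕ => u p.1 * u p.2 /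
        ((p.1 + p.2 + 1 / 2) * (y + p.1))) := by
    refine Summable.of_norm ?_
    have hfibn : ∀ n : ℕ, HasSum (fun m : ℕ => ‖u n * u m / ((n + m + 1 / 2) * (y + n))‖)
        (Real.pi * (u n ^ 2 / |y + n|)) := by
      intro n
      have h := (inner n).mul_left (u n / |y + n|)
      rw [show u n / |y + n| * (Real.pi * u n) = Real.pi * (u n ^ 2 / |y + n|) by ring] at h
      refine h.congr_term fun m => ?_
      have h1 := hu0 n
      have h2 := hu0 m
      rw [norm_div, norm_mul, norm_mul, Real.norm_of_nonneg h1.le, Real.norm_of_nonneg h2.le,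
        Real.norm_of_nonneg (by positivity : (0 : ℝ) ≤ n + m + 1 / 2), Real.norm_eq_abs,
        show (n : ℝ) + 1 / 2 + m = n + m + 1 / 2 by ring, div_mul_div_comm]
      ring
    rw [summable_prod_of_nonneg fun _ => norm_nonneg _]
    refine ⟨fun n => (hfibn n).summable, ?_⟩
    simp_rw [fun n => (hfibn n).tsum_eq]
    refine Summable.mul_left _ ?_
    refine Summable.of_nonneg_of_le (fun n => by positivity) (fun n => ?_)
      (summable_binomCoeff_div (b := 1 / 2) (by norm_num) (by norm_num) hy).norm
    rw [norm_div, Real.norm_of_nonneg (hu0 n).le, Real.norm_eq_abs]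
    gcongr
    rw [sq]
    exact mul_le_of_le_one_left (hu0 n).le (binomCoeff_half_le_one n)
  exact ⟨_, hsum.hasSum, hsum.hasSum.prod_fiberwise hfib⟩

/-- `∑ (1/2)_k² / k!² (1/(a+k) + 1/(1/2-a+k)) = B(a,1/2) B(1/2-a,1/2) / π`. -/
theorem hasSum_binomCoeff_half_sq {a : ℝ} (ha : ∀ m : ℕ, a ≠ -m)
    (ha' : ∀ m : ℕ, 1 / 2 - a ≠ -m) :
    HasSum (fun k : ℕ => binomCoeff (1 / 2) k ^ 2 * (1 / (a + k) + 1 / (1 / 2 - a + k)))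
      (Real.Gamma a * Real.Gamma (1 / 2) / Real.Gamma (a + 1 / 2) *
        (Real.Gamma (1 / 2 - a) * Real.Gamma (1 / 2) / Real.Gamma (1 / 2 - a + 1 / 2)) /
          Real.pi) := by
  obtain ⟨s, h1, h2⟩ := hasSum_binomCoeff_half_kernel ha
  obtain ⟨t, h3, h4⟩ := hasSum_binomCoeff_half_kernel ha'
  have hS := hasSum_binomCoeff_div (b := 1 / 2) (by norm_num) (by norm_num) ha
  have hT := hasSum_binomCoeff_div (b := 1 / 2) (by norm_num) (by norm_num) ha'
  have h5 := h1.add ((Equiv.prodComm ℕ ℕ).hasSum_iff.2 h3)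
  have e : ∀ p : ℕ × ℕ, binomCoeff (1 / 2) p.1 / (a + p.1) *
      (binomCoeff (1 / 2) p.2 / (1 / 2 - a + p.2)) =
      binomCoeff (1 / 2) p.1 * binomCoeff (1 / 2) p.2 / ((p.1 + p.2 + 1 / 2) * (a + p.1)) +
      ((fun p : ℕ × ℕ => binomCoeff (1 / 2) p.1 * binomCoeff (1 / 2) p.2 /
        ((p.1 + p.2 + 1 / 2) * (1 / 2 - a + p.1))) ∘ Equiv.prodComm ℕ ℕ) p := by
    intro p
    have e1 : a + p.1 ≠ 0 := fun h => ha p.1 (by linarith)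
    have e2 : 1 / 2 - a + p.2 ≠ 0 := fun h => ha' p.2 (by linarith)
    have e3 : (p.1 : ℝ) + p.2 + 1 / 2 ≠ 0 := by positivity
    simp only [Function.comp_apply, Equiv.prodComm_apply, Prod.fst_swap, Prod.snd_swap]
    rw [show (p.2 : ℝ) + p.1 + 1 / 2 = p.1 + p.2 + 1 / 2 by ring]
    generalize binomCoeff (1 / 2) p.1 = x
    generalize binomCoeff (1 / 2) p.2 = y
    rw [div_mul_div_comm, div_add_div _ _ (mul_ne_zero e3 e1) (mul_ne_zero e3 e2),
      div_eq_div_iff (mul_ne_zero e1 e2)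
        (mul_ne_zero (mul_ne_zero e3 e1) (mul_ne_zero e3 e2))]
    ring
  have h6 := h5.congr_term e
  have h7 := (hS.mul hT h6.summable).unique h6
  rw [h7]
  refine ((h2.add h4).div_const Real.pi).congr_term fun k => ?_
  have := Real.pi_ne_zero
  field_simp

theorem beta_half_mul_beta_half {x : ℝ} (hs : Real.sin (Real.pi * x) ≠ 0)
    (hc : Real.cos (Real.pi * x) ≠ 0) :
    Real.cos (Real.pi * x) * (Real.Gamma x * Real.Gamma (1 / 2) / Real.Gamma (x + 1 / 2) *
        (Real.Gamma (1 / 2 - x) * Real.Gamma (1 / 2) / Real.Gamma (1 / 2 - x + 1 / 2)) /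
          Real.pi) =
      Real.sin (Real.pi * x) * (Real.Gamma x / Real.Gamma (x + 1 / 2)) ^ 2 := by
  have h1 := Real.Gamma_mul_Gamma_one_sub x
  have h2 := Real.Gamma_mul_Gamma_one_sub (x + 1 / 2)
  rw [show Real.pi * (x + 1 / 2) = Real.pi * x + Real.pi / 2 by ring, Real.sin_add_pi_div_two,
    show 1 - (x + 1 / 2) = 1 / 2 - x by ring] at h2
  rw [show 1 / 2 - x + 1 / 2 = 1 - x by ring, Real.Gamma_one_half_eq]
  have hpi := Real.pi_ne_zero
  have hsq := Real.mul_self_sqrt Real.pi_pos.le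
  have n1 : Real.Gamma x * Real.Gamma (1 - x) ≠ 0 := by rw [h1]; positivity
  have n2 : Real.Gamma (x + 1 / 2) * Real.Gamma (1 / 2 - x) ≠ 0 := by rw [h2]; positivity
  have n3 := right_ne_zero_of_mul n1
  have n4 := left_ne_zero_of_mul n1
  have n5 := left_ne_zero_of_mul n2
  rw [eq_div_iff hs] at h1
  rw [eq_div_iff hc] at h2
  have e : Real.Gamma x * √Real.pi / Real.Gamma (x + 1 / 2) *
        (Real.Gamma (1 / 2 - x) * √Real.pi / Real.Gamma (1 - x)) / Real.pi =
      Real.Gamma x * Real.Gamma (1 / 2 - x) / (Real.Gamma (x + 1 / 2) * Real.Gamma (1 - x)) := by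
    rw [div_mul_div_comm, show Real.Gamma x * √Real.pi * (Real.Gamma (1 / 2 - x) * √Real.pi) =
      Real.Gamma x * Real.Gamma (1 / 2 - x) * (√Real.pi * √Real.pi) by ring, hsq]
    field_simp
  rw [e, div_pow, mul_div_assoc', mul_div_assoc', div_eq_div_iff (by positivity) (by positivity)]
  linear_combination (Real.Gamma x * Real.Gamma (x + 1 / 2)) * (h2 - h1)

theorem one_div_mul_le_rpow {p q N ε : ℝ} (hp : 0 < p) (hq : 0 < q) (hN : 0 < N)
    (h : N ≤ p + q) (hε0 : 0 < ε) (hε : ε ≤ 1) :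
    1 / (p * q) ≤ (N / 2) ^ (ε - 1) * (p ^ (-1 - ε) + q ^ (-1 - ε)) := by
  wlog hpq : p ≤ q generalizing p q
  · rw [mul_comm p, add_comm (p ^ _)]
    exact this hq hp (by linarith) (by linarith)
  have hp' : 0 ≤ p ^ (-1 - ε) := by positivity
  have hq' : 0 ≤ q ^ (-1 - ε) := by positivity
  have hN' : 0 ≤ (N / 2) ^ (ε - 1) := by positivity
  calc 1 / (p * q) = p⁻¹ * (q ^ (ε - 1) * q ^ (-ε)) := by
        rw [← Real.rpow_add hq, show ε - 1 + -ε = -1 by ring, Real.rpow_neg_one]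
        field_simp
    _ ≤ p⁻¹ * ((N / 2) ^ (ε - 1) * p ^ (-ε)) := by
        gcongr p⁻¹ * (?_ * ?_)
        · exact Real.rpow_le_rpow_of_nonpos (by positivity) (by linarith) (by linarith)
        · exact Real.rpow_le_rpow_of_nonpos hp hpq (by linarith)
    _ = (N / 2) ^ (ε - 1) * p ^ (-1 - ε) := by
        rw [show -1 - ε = -1 + -ε by ring, Real.rpow_add hp, Real.rpow_neg_one]
        ring
    _ ≤ _ := by gcongr; linarith

theorem exists_le_abs_add_sub {θ : ℝ} (h1 : ∀ m : ℕ, θ ≠ -m) (h2 : ∀ m : ℕ, -θ ≠ -m) :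
    ∃ δ > 0, ∀ k n : ℕ, δ * (1 + |(k : ℝ) - n|) ≤ |θ + k - n| := by
  obtain ⟨δ, hδ, hd⟩ := exists_le_abs_add h1
  obtain ⟨δ', hδ', hd'⟩ := exists_le_abs_add h2
  refine ⟨min δ δ', lt_min hδ hδ', fun k n => ?_⟩
  rcases le_total n k with h | h
  · obtain ⟨j, rfl⟩ := Nat.exists_eq_add_of_le h
    have := hd j
    push_cast
    rw [show θ + (n + j) - n = θ + j by ring, show (n : ℝ) + j - n = j by ring, Nat.abs_cast,
      add_comm 1]
    exact le_trans (by gcongr; exact min_le_left _ _) this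
  · obtain ⟨j, rfl⟩ := Nat.exists_eq_add_of_le h
    have := hd' j
    push_cast
    rw [show θ + k - (k + j) = -(-θ + j) by ring, show (k : ℝ) - (k + j) = -j by ring, abs_neg,
      abs_neg, Nat.abs_cast, add_comm 1]
    exact le_trans (by gcongr; exact min_le_right _ _) this

theorem summable_one_add_abs_rpow {p : ℝ} (hp : p < -1) :
    Summable fun j : ℤ => (1 + |(j : ℝ)|) ^ p := by
  have h := summable_nat_add_one_rpow hp
  refine Summable.of_nat_of_neg ?_ ?_ <;>
  · refine h.congr fun n => ?_
    simp [add_comm]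

theorem summable_kernel_majorant {b θ : ℝ} (hb0 : 0 < b) (hb : b < 1)
    (h1 : ∀ m : ℕ, θ ≠ -m) (h2 : ∀ m : ℕ, -θ ≠ -m) :
    Summable fun p : ℕ × ℕ =>
      binomCoeff b p.1 * binomCoeff (1 / 2) p.2 ^ 2 / |θ + p.2 - p.1| := by
  obtain ⟨δ, hδ, hd⟩ := exists_le_abs_add_sub h1 h2
  set ε := b / 2 with hε
  have s1 := summable_nat_add_one_rpow (p := -1 - ε) (by linarith)
  have s2 := summable_one_add_abs_rpow (p := -1 - ε) (by linarith)
  have t1 := s1.mul_of_nonneg s1 (fun n => by positivity) (fun n => by positivity)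
  have t2 := s1.mul_of_nonneg s2 (fun n => by positivity) (fun n => by positivity)
  have hinj : Function.Injective fun p : ℕ × ℕ => ((p.1, (p.2 : ℤ) - p.1) : ℕ × ℤ) := by
    rintro ⟨n, k⟩ ⟨n', k'⟩ h
    simp only [Prod.mk.injEq] at h ⊢
    omega
  have t3 := t2.comp_injective hinj
  refine Summable.of_nonneg_of_le (fun p => ?_) (fun p => ?_)
    ((t1.add t3).mul_left (1 / δ * (1 / 2) ^ (ε - 1)))
  · have := (binomCoeff_pos hb p.1).le
    positivity
  · obtain ⟨n, k⟩ := p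
    have hn : (0 : ℝ) < n + 1 := by positivity
    have hk : (0 : ℝ) < k + 1 := by positivity
    have hq : (0 : ℝ) < 1 + |(k : ℝ) - n| := by positivity
    have key := one_div_mul_le_rpow hk hq hn
      (by have := neg_abs_le ((k : ℝ) - n); linarith) (by positivity : 0 < ε) (by linarith)
    have hw := (binomCoeff_pos hb n).le
    simp only [Function.comp_apply]
    push_cast
    calc binomCoeff b n * binomCoeff (1 / 2) k ^ 2 / |θ + k - n|
        ≤ ((n : ℝ) + 1) ^ (-b) * ((k : ℝ) + 1)⁻¹ / (δ * (1 + |(k : ℝ) - n|)) := by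
          gcongr
          · exact binomCoeff_le hb0 hb n
          · exact binomCoeff_half_sq_le k
          · exact hd k n
      _ = 1 / δ * ((n : ℝ) + 1) ^ (-b) * (1 / ((k + 1) * (1 + |(k : ℝ) - n|))) := by
          field_simp
      _ ≤ 1 / δ * ((n : ℝ) + 1) ^ (-b) * ((((n : ℝ) + 1) / 2) ^ (ε - 1) *
          (((k : ℝ) + 1) ^ (-1 - ε) + (1 + |(k : ℝ) - n|) ^ (-1 - ε))) := by gcongr
      _ = _ := by
          rw [show ((n : ℝ) + 1) / 2 = (n + 1) * (1 / 2) by ring,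
            Real.mul_rpow hn.le (by norm_num)]
          have e : ((n : ℝ) + 1) ^ (-1 - ε) = ((n : ℝ) + 1) ^ (-b) * ((n : ℝ) + 1) ^ (ε - 1) := by
            rw [← Real.rpow_add hn]
            congr 1
            rw [hε]; ring
          rw [e]
          ring

/-- Comparison of the kernel `1/(a+n+k)` with the majorant at `θ = 1/2`. -/
theorem summable_kernel_add {a b : ℝ} (ha : 0 < a) (hb0 : 0 < b) (hb : b < 1) :
    Summable fun p : ℕ × ℕ =>
      binomCoeff b p.1 * binomCoeff (1 / 2) p.2 ^ 2 / (a + p.1 + p.2) := by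
  have h := summable_kernel_majorant (θ := 1 / 2) hb0 hb
    (fun m h => by have : (0 : ℝ) ≤ m := m.cast_nonneg
                   linarith)
    (fun m h => by
      have h2 : (1 : ℝ) = ((2 * m : ℕ) : ℝ) := by push_cast; linarith
      have : 1 = 2 * m := by exact_mod_cast h2
      omega)
  refine Summable.of_nonneg_of_le (fun p => ?_) (fun p => ?_) (h.mul_left (1 / (min a 1)))
  · have := (binomCoeff_pos hb p.1).le
    positivity
  · obtain ⟨n, k⟩ := p
    have hw := (binomCoeff_pos hb n).le
    have hm : 0 < min a 1 := lt_min ha one_pos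
    have hn : (0 : ℝ) ≤ n := n.cast_nonneg
    have hk : (0 : ℝ) ≤ k := k.cast_nonneg
    have hpos : 0 < |1 / 2 + (k : ℝ) - n| := by
      refine abs_pos.2 fun h => ?_
      have h2 : (1 : ℝ) + ((2 * k : ℕ) : ℝ) = ((2 * n : ℕ) : ℝ) := by push_cast; linarith
      have : 1 + 2 * k = 2 * n := by exact_mod_cast h2
      omega
    have hle : min a 1 * |1 / 2 + (k : ℝ) - n| ≤ a + n + k := by
      have h1 : |1 / 2 + (k : ℝ) - n| ≤ 1 + n + k := abs_le.2 ⟨by linarith, by linarith⟩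
      have h2 := min_le_left a 1
      have h3 := min_le_right a 1
      calc _ ≤ min a 1 * (1 + n + k) := by gcongr
        _ ≤ _ := by nlinarith
    calc _ ≤ binomCoeff b n * binomCoeff (1 / 2) k ^ 2 / (min a 1 * |1 / 2 + (k : ℝ) - n|) := by
          gcongr
      _ = _ := by field_simp

/-- `B(a,b) ₃F₂(1/2,1/2,a;1,a+b;1)` as a single series. -/
noncomputable def betaSeries (a b : ℝ) : ℝ :=
  ∑' k : ℕ, binomCoeff (1 / 2) k ^ 2 *
    (Real.Gamma (a + k) * Real.Gamma b / Real.Gamma (a + k + b))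

/-- The series `∑ (1-b)_n / n! (Γ(a+n) / Γ(a+n+1/2))²`. -/
noncomputable def gammaRatioSeries (a b : ℝ) : ℝ :=
  ∑' n : ℕ, binomCoeff b n * (Real.Gamma (a + n) / Real.Gamma (a + n + 1 / 2)) ^ 2

theorem add_natCast_ne_neg {a : ℝ} (ha : 0 < a) (n m : ℕ) : a + n ≠ -m := by
  have h1 : (0 : ℝ) ≤ n := n.cast_nonneg
  have h2 : (0 : ℝ) ≤ m := m.cast_nonneg
  exact fun h => by linarith

theorem hasSum_betaSeries {a b : ℝ} (ha : 0 < a) (hb0 : 0 < b) (hb : b < 1) :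
    HasSum (fun k : ℕ => binomCoeff (1 / 2) k ^ 2 *
      (Real.Gamma (a + k) * Real.Gamma b / Real.Gamma (a + k + b))) (betaSeries a b) := by
  have h := (Equiv.prodComm ℕ ℕ).hasSum_iff.2 (summable_kernel_add ha hb0 hb).hasSum
  have h2 := h.prod_fiberwise fun k =>
    ((hasSum_binomCoeff_div hb0 hb (add_natCast_ne_neg ha k)).mul_left
      (binomCoeff (1 / 2) k ^ 2)).congr_term fun n => by
        simp only [Function.comp_apply, Equiv.prodComm_apply, Prod.fst_swap, Prod.snd_swap]
        rw [show a + (k : ℝ) + n = a + n + k by ring]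
        ring
  exact h2.summable.hasSum

theorem half_sub_ne_intCast {a : ℝ} (ha0 : 0 < a) (ha : a < 1) (ha' : a ≠ 1 / 2) (j : ℤ) :
    1 / 2 - a ≠ j := by
  intro h
  have h1 : j < 1 := by
    have : (j : ℝ) < 1 := by linarith
    exact_mod_cast this
  have h2 : -1 < j := by
    have : (-1 : ℝ) < j := by linarith
    exact_mod_cast this
  have h3 : j = 0 := by omega
  rw [h3, Int.cast_zero] at h
  exact ha' (by linarith)

theorem cos_pi_mul_ne_zero {a : ℝ} (ha0 : 0 < a) (ha : a < 1) (ha' : a ≠ 1 / 2) :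
    Real.cos (Real.pi * a) ≠ 0 := by
  intro h0
  obtain ⟨j, hj⟩ := Real.cos_eq_zero_iff.1 h0
  have h3 : a = (2 * j + 1) / 2 :=
    mul_left_cancel₀ Real.pi_ne_zero (by linarith)
  exact half_sub_ne_intCast ha0 ha ha' (-j) (by push_cast; linarith)

theorem cos_mul_neg_beta {a b c : ℝ} (ha0 : 0 < a) (ha : a < 1) (ha' : a ≠ 1 / 2) (hc0 : 0 < c)
    (hc : c < 1) (hb0 : 0 < b) (h : a + b + c = 3 / 2) (k : ℕ) :
    Real.cos (Real.pi * a) * -(Real.Gamma (a - 1 / 2 - k) * Real.Gamma b /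
        Real.Gamma (a - 1 / 2 - k + b)) =
      Real.sin (Real.pi * c) * (Real.Gamma (c + k) * Real.Gamma b / Real.Gamma (c + k + b)) := by
  have hp : 0 < Real.Gamma (c + k) := Real.Gamma_pos_of_pos (by positivity)
  have hq : 0 < Real.Gamma (c + k + b) := Real.Gamma_pos_of_pos (by positivity)
  have h1 := Real.Gamma_mul_Gamma_one_sub (a - 1 / 2 - k)
  have h2 := Real.Gamma_mul_Gamma_one_sub (a - 1 / 2 - k + b)
  have hsign : ((-1 : ℝ) ^ k) * (-1) ^ k = 1 := by
    rw [← mul_pow]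
    norm_num
  have hsc : 0 < Real.sin (Real.pi * c) :=
    Real.sin_pos_of_pos_of_lt_pi (mul_pos Real.pi_pos hc0) (by nlinarith [Real.pi_pos])
  have hca := cos_pi_mul_ne_zero ha0 ha ha'
  have s1 : Real.sin (Real.pi * (a - 1 / 2 - k)) = -((-1) ^ k * Real.cos (Real.pi * a)) := by
    rw [show Real.pi * (a - 1 / 2 - k) = Real.pi * a - Real.pi / 2 - k * Real.pi by ring,
      Real.sin_sub_nat_mul_pi, Real.sin_sub_pi_div_two]
    ring
  have s2 : Real.sin (Real.pi * (a - 1 / 2 - k + b)) = (-1) ^ k * Real.sin (Real.pi * c) := by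
    rw [show Real.pi * (a - 1 / 2 - k + b) = Real.pi - Real.pi * c - k * Real.pi by
      rw [show a = 3 / 2 - b - c by linarith]; ring,
      Real.sin_sub_nat_mul_pi, Real.sin_pi_sub]
  have hk : ((-1 : ℝ) ^ k) ≠ 0 := by positivity
  rw [s1, show 1 - (a - 1 / 2 - k) = c + k + b by linarith] at h1
  rw [s2, show 1 - (a - 1 / 2 - k + b) = c + k by linarith] at h2
  have g1 : Real.Gamma (a - 1 / 2 - k) =
      Real.pi / -((-1) ^ k * Real.cos (Real.pi * a)) / Real.Gamma (c + k + b) := by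
    rw [← h1]; field_simp
  have g2 : Real.Gamma (a - 1 / 2 - k + b) =
      Real.pi / ((-1) ^ k * Real.sin (Real.pi * c)) / Real.Gamma (c + k) := by
    rw [← h2]; field_simp
  have := Real.pi_ne_zero
  rw [g1, g2]
  field_simp

theorem gammaRatioSeries_eq_betaSeries {a b c : ℝ} (ha0 : 0 < a) (ha : a < 1) (ha' : a ≠ 1 / 2)
    (hb0 : 0 < b) (hb : b < 1) (hc0 : 0 < c) (hc : c < 1) (h : a + b + c = 3 / 2) :
    Real.sin (Real.pi * a) * gammaRatioSeries a b =
      Real.cos (Real.pi * a) * betaSeries a b + Real.sin (Real.pi * c) * betaSeries c b := by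
  have hint := half_sub_ne_intCast ha0 ha ha'
  have hθ : ∀ n m : ℕ, 1 / 2 - (a + n) ≠ -m := fun n m h => hint (n - m) (by
    push_cast; linarith)
  have hT1 := summable_kernel_add ha0 hb0 hb
  have hT2 : Summable fun p : ℕ × ℕ =>
      binomCoeff b p.1 * binomCoeff (1 / 2) p.2 ^ 2 / (1 / 2 - (a + p.1) + p.2) := by
    refine Summable.of_norm ((summable_kernel_majorant (θ := 1 / 2 - a) hb0 hb
      (fun m h => hint (-m) (by push_cast; linarith))
      (fun m h => hint m (by push_cast; linarith))).congr fun p => ?_)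
    have := binomCoeff_pos hb p.1
    rw [norm_div, Real.norm_of_nonneg (by positivity), Real.norm_eq_abs]
    congr 2
    ring
  have hT := (hT1.add hT2).hasSum
  have hX := hT.prod_fiberwise fun n =>
    ((hasSum_binomCoeff_half_sq (add_natCast_ne_neg ha0 n) (hθ n)).mul_left
      (binomCoeff b n)).congr_term fun k => by ring
  have hV := ((Equiv.prodComm ℕ ℕ).hasSum_iff.2 hT).prod_fiberwise fun k =>
    (((hasSum_binomCoeff_div hb0 hb (add_natCast_ne_neg ha0 k)).add
      (hasSum_binomCoeff_div hb0 hb (y := a - 1 / 2 - k) (fun m h => hint (m - k) (by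
        push_cast; linarith))).neg).mul_left
      (binomCoeff (1 / 2) k ^ 2)).congr_term fun n => by
        simp only [Function.comp_apply, Equiv.prodComm_apply, Prod.fst_swap, Prod.snd_swap]
        rw [show a + (k : ℝ) + n = a + n + k by ring,
          show a - 1 / 2 - (k : ℝ) + n = -(1 / 2 - (a + n) + k) by ring, div_neg]
        ring
  have hc1 := hX.mul_left (Real.cos (Real.pi * a))
  have hc2 := hV.mul_left (Real.cos (Real.pi * a))
  have hG := ((hasSum_betaSeries ha0 hb0 hb).mul_left (Real.cos (Real.pi * a))).add
    ((hasSum_betaSeries hc0 hb0 hb).mul_left (Real.sin (Real.pi * c)))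
  rw [gammaRatioSeries, ← tsum_mul_left, ← hG.tsum_eq]
  trans ∑' i : ℕ, Real.cos (Real.pi * a) * (binomCoeff b i *
      (Real.Gamma (a + i) * Real.Gamma (1 / 2) / Real.Gamma (a + i + 1 / 2) *
        (Real.Gamma (1 / 2 - (a + i)) * Real.Gamma (1 / 2) /
          Real.Gamma (1 / 2 - (a + i) + 1 / 2)) / Real.pi))
  · refine tsum_congr fun n => ?_
    have hs : Real.sin (Real.pi * (a + n)) = (-1) ^ n * Real.sin (Real.pi * a) := by
      rw [mul_add, mul_comm Real.pi (n : ℝ), Real.sin_add_nat_mul_pi]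
    have hcs : Real.cos (Real.pi * (a + n)) = (-1) ^ n * Real.cos (Real.pi * a) := by
      rw [mul_add, mul_comm Real.pi (n : ℝ), Real.cos_add_nat_mul_pi]
    have hk : ((-1 : ℝ) ^ n) ≠ 0 := by positivity
    have hs0 : Real.sin (Real.pi * a) ≠ 0 :=
      (Real.sin_pos_of_pos_of_lt_pi (by positivity) (by nlinarith [Real.pi_pos])).ne'
    have hc0 := cos_pi_mul_ne_zero ha0 ha ha'
    have key := beta_half_mul_beta_half (x := a + n) (by rw [hs]; positivity)
      (by rw [hcs]; positivity)
    rw [hs, hcs, mul_assoc, mul_assoc] at key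
    have key := mul_left_cancel₀ hk key
    linear_combination -binomCoeff b n * key
  · rw [hc1.tsum_eq, ← hc2.tsum_eq]
    refine tsum_congr fun k => ?_
    have := cos_mul_neg_beta ha0 ha ha' hc0 hc hb0 h k
    linear_combination binomCoeff (1 / 2) k ^ 2 * this

theorem hasSum_thomae_kernel {a b e : ℝ} (ha : 0 < a) (hb : b < 1) (he : 0 < e)
    (h : e = a + b - 1 / 2) (n : ℕ) :
    HasSum (fun m : ℕ => poch a n / n.factorial * Real.Gamma (a + n) *
        (poch e m / m.factorial * Real.Gamma (e + m)) / Real.Gamma (2 * a + b + n + m))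
      (Real.Gamma (1 - b) * Real.Gamma e / Real.Gamma a *
        (binomCoeff b n * (Real.Gamma (a + n) / Real.Gamma (a + n + 1 / 2)) ^ 2)) := by
  have hn : (0 : ℝ) ≤ n := n.cast_nonneg
  have h1 := (hasSum_gauss (γ := 2 * a + b + n) he he (by linarith)).mul_left
    (poch a n / n.factorial * Real.Gamma (a + n))
  rw [show 2 * a + b + n - e - e = 1 - b + n by linarith,
    show 2 * a + b + n - e = a + n + 1 / 2 by linarith, Gamma_add_nat (x := 1 - b) (by linarith)]
    at h1
  have g : 0 < Real.Gamma a := Real.Gamma_pos_of_pos ha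
  have g2 : 0 < Real.Gamma (a + n + 1 / 2) := Real.Gamma_pos_of_pos (by positivity)
  have e1 : Real.Gamma (1 - b) * Real.Gamma e / Real.Gamma a *
        (binomCoeff b n * (Real.Gamma (a + n) / Real.Gamma (a + n + 1 / 2)) ^ 2) =
      poch a n / n.factorial * Real.Gamma (a + n) *
        (Real.Gamma e * (poch (1 - b) n * Real.Gamma (1 - b)) /
          (Real.Gamma (a + n + 1 / 2) * Real.Gamma (a + n + 1 / 2))) := by
    rw [Gamma_add_nat ha n, binomCoeff]
    field_simp
  rw [e1]
  exact h1.congr_term fun m => by ring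

/-- Equality of two iterated sums of nonnegative terms. -/
theorem tsum_comm_of_nonneg {f : ℕ → ℕ → ℝ} {g h : ℕ → ℝ} (hf : ∀ n m, 0 ≤ f n m)
    (hg : ∀ n, HasSum (f n) (g n)) (hh : ∀ m, HasSum (fun n => f n m) (h m)) :
    ∑' n, g n = ∑' m, h m := by
  have hg0 : ∀ n, 0 ≤ g n := fun n => (hg n).nonneg (hf n)
  have hh0 : ∀ m, 0 ≤ h m := fun m => (hh m).nonneg fun n => hf n m
  have e1 : ∀ n, ENNReal.ofReal (g n) = ∑' m, ENNReal.ofReal (f n m) := fun n => by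
    rw [← (hg n).tsum_eq, ENNReal.ofReal_tsum_of_nonneg (hf n) (hg n).summable]
  have e2 : ∀ m, ENNReal.ofReal (h m) = ∑' n, ENNReal.ofReal (f n m) := fun m => by
    rw [← (hh m).tsum_eq, ENNReal.ofReal_tsum_of_nonneg (fun n => hf n m) (hh m).summable]
  have e3 : ∑' n, ENNReal.ofReal (g n) = ∑' m, ENNReal.ofReal (h m) := by
    simp_rw [e1, e2]
    exact ENNReal.tsum_comm
  have e4 := congrArg ENNReal.toReal e3
  rw [ENNReal.tsum_toReal_eq fun _ => ENNReal.ofReal_ne_top,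
    ENNReal.tsum_toReal_eq fun _ => ENNReal.ofReal_ne_top] at e4
  simpa only [ENNReal.toReal_ofReal, hg0, hh0] using e4

/-- A case of Thomae's transformation of `₃F₂` series. -/
theorem gammaRatioSeries_thomae {a b e : ℝ} (ha : 0 < a) (hb0 : 0 < b) (hb : b < 1) (he : 0 < e)
    (h : e = a + b - 1 / 2) :
    Real.Gamma (1 - b) * gammaRatioSeries a b * Real.Gamma e ^ 2 =
      Real.Gamma b * gammaRatioSeries e (1 - b) * Real.Gamma a ^ 2 := by
  have hG : ∀ {x : ℝ}, 0 < x → 0 < Real.Gamma x := Real.Gamma_pos_of_pos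
  have key := tsum_comm_of_nonneg (fun n m => ?_) (hasSum_thomae_kernel ha hb he h) fun m =>
    (hasSum_thomae_kernel (b := 1 - b) he (by linarith) ha (by linarith) m).congr_term fun n => by
      rw [show 2 * e + (1 - b) + m + n = 2 * a + b + n + m by linarith]
      ring
  · rw [tsum_mul_left, tsum_mul_left, ← gammaRatioSeries, ← gammaRatioSeries, sub_sub_cancel]
      at key
    have g1 := hG ha
    have g2 := hG he
    field_simp at key
    linear_combination key
  · have := poch_pos ha n
    have := poch_pos he m
    have hn : (0 : ℝ) ≤ n := n.cast_nonneg
    have hm : (0 : ℝ) ≤ m := m.cast_nonneg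
    have := hG (show 0 < a + n by positivity)
    have := hG (show 0 < e + m by positivity)
    have := hG (show 0 < 2 * a + b + n + m by positivity)
    positivity

theorem betaFn_mul_threeF2 {r s : ℝ} (hr : 0 < r) (hs : r < s) :
    betaFn r (s - r) * threeF2 (1 / 2) (1 / 2) r 1 s = betaSeries r (s - r) := by
  rw [threeF2, ← tsum_mul_left]
  refine tsum_congr fun k => ?_
  have h1 : poch 1 k = k.factorial := by
    have := Gamma_add_nat one_pos k
    rw [add_comm, Real.Gamma_nat_eq_factorial, Real.Gamma_one, mul_one] at this
    exact this.symm
  have hs0 : 0 < s := hr.trans hs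
  have h2 := poch_pos hs0 k
  have h3 : 0 < Real.Gamma s := Real.Gamma_pos_of_pos hs0
  rw [betaFn, binomCoeff, h1, show r + k + (s - r) = s + k by ring, add_sub_cancel,
    Gamma_add_nat hr, Gamma_add_nat hs0, show (1 : ℝ) - 1 / 2 = 1 / 2 by norm_num]
  field_simp

theorem sin_pi_div_eight_mul_Gamma :
    Real.sin (Real.pi / 8) * Real.Gamma (1 / 8) ^ 2 * Real.Gamma (3 / 4) =
      √2 * Real.cos (Real.pi / 8) * Real.Gamma (3 / 8) ^ 2 * Real.Gamma (1 / 4) ∧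
    Real.sin (Real.pi / 8) * (Real.Gamma (1 / 8) * Real.Gamma (7 / 8)) = Real.pi ∧
    Real.cos (Real.pi / 8) * (Real.Gamma (3 / 8) * Real.Gamma (5 / 8)) = Real.pi := by
  have hpi := Real.pi_pos
  have hS : 0 < Real.sin (Real.pi / 8) :=
    Real.sin_pos_of_pos_of_lt_pi (by linarith) (by linarith)
  have hC : 0 < Real.cos (Real.pi / 8) :=
    Real.cos_pos_of_mem_Ioo ⟨by linarith, by linarith⟩
  have d1 := Real.Gamma_mul_Gamma_add_half (1 / 8)
  have d3 := Real.Gamma_mul_Gamma_add_half (3 / 8)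
  have r1 := Real.Gamma_mul_Gamma_one_sub (1 / 8)
  have r3 := Real.Gamma_mul_Gamma_one_sub (3 / 8)
  rw [show Real.pi * (3 / 8) = Real.pi / 2 - Real.pi / 8 by ring, Real.sin_pi_div_two_sub,
    eq_div_iff hC.ne'] at r3
  rw [show Real.pi * (1 / 8) = Real.pi / 8 by ring, eq_div_iff hS.ne'] at r1
  have hp : (2 : ℝ) ^ (1 - 1 / 4 : ℝ) = √2 * 2 ^ (1 - 3 / 4 : ℝ) := by
    rw [Real.sqrt_eq_rpow, ← Real.rpow_add two_pos]
    norm_num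
  norm_num only at d1 d3 r1 r3 hp
  rw [hp] at d1
  refine ⟨?_, by linarith, by linarith⟩
  have h5 : 0 < Real.Gamma (5 / 8) := Real.Gamma_pos_of_pos (by norm_num)
  have h7 : 0 < Real.Gamma (7 / 8) := Real.Gamma_pos_of_pos (by norm_num)
  have hq : 0 < (2 : ℝ) ^ (1 / 4 : ℝ) * √Real.pi := by positivity
  refine mul_right_cancel₀ (mul_pos (mul_pos h5 h7) hq).ne' ?_
  linear_combination
    Real.Gamma (1 / 8) * Real.Gamma (5 / 8) * Real.Gamma (3 / 4) * 2 ^ (1 / 4 : ℝ) * √Real.pi * r1 -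
    Real.pi * Real.Gamma (1 / 8) * Real.Gamma (5 / 8) * d3 -
    √2 * Real.Gamma (1 / 4) * 2 ^ (1 / 4 : ℝ) * √Real.pi * Real.Gamma (3 / 8) *
      Real.Gamma (7 / 8) * r3 +
    Real.pi * Real.Gamma (3 / 8) * Real.Gamma (7 / 8) * d1

theorem betaSeries_relations :
    √2 * betaSeries (1 / 8) (3 / 4) = √2 * betaSeries (3 / 8) (1 / 4) - betaSeries (5 / 8) (3 / 4) ∧
    2 * betaSeries (7 / 8) (1 / 4) =
      √2 * betaSeries (3 / 8) (1 / 4) + betaSeries (5 / 8) (3 / 4) := by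
  obtain ⟨hg, r1, r3⟩ := sin_pi_div_eight_mul_Gamma
  have hpi := Real.pi_pos
  have s1 : Real.sin (Real.pi * (1 / 8)) = Real.sin (Real.pi / 8) := by ring_nf
  have c1 : Real.cos (Real.pi * (1 / 8)) = Real.cos (Real.pi / 8) := by ring_nf
  have s3 : Real.sin (Real.pi * (3 / 8)) = Real.cos (Real.pi / 8) := by
    rw [← Real.sin_pi_div_two_sub]; ring_nf
  have c3 : Real.cos (Real.pi * (3 / 8)) = Real.sin (Real.pi / 8) := by
    rw [← Real.cos_pi_div_two_sub]; ring_nf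
  have s5 : Real.sin (Real.pi * (5 / 8)) = Real.cos (Real.pi / 8) := by
    rw [← Real.sin_add_pi_div_two]; ring_nf
  have c5 : Real.cos (Real.pi * (5 / 8)) = -Real.sin (Real.pi / 8) := by
    rw [← Real.cos_add_pi_div_two]; ring_nf
  have s7 : Real.sin (Real.pi * (7 / 8)) = Real.sin (Real.pi / 8) := by
    rw [← Real.sin_pi_sub]; ring_nf
  have c7 : Real.cos (Real.pi * (7 / 8)) = -Real.cos (Real.pi / 8) := by
    rw [← Real.cos_pi_sub]; ring_nf
  have e1 := gammaRatioSeries_eq_betaSeries (a := 1 / 8) (b := 3 / 4) (c := 5 / 8) (by norm_num)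
    (by norm_num) (by norm_num) (by norm_num) (by norm_num) (by norm_num) (by norm_num)
    (by norm_num)
  have e3 := gammaRatioSeries_eq_betaSeries (a := 3 / 8) (b := 1 / 4) (c := 7 / 8) (by norm_num)
    (by norm_num) (by norm_num) (by norm_num) (by norm_num) (by norm_num) (by norm_num)
    (by norm_num)
  have e5 := gammaRatioSeries_eq_betaSeries (a := 5 / 8) (b := 3 / 4) (c := 1 / 8) (by norm_num)
    (by norm_num) (by norm_num) (by norm_num) (by norm_num) (by norm_num) (by norm_num)
    (by norm_num)
  have e7 := gammaRatioSeries_eq_betaSeries (a := 7 / 8) (b := 1 / 4) (c := 3 / 8) (by norm_num)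
    (by norm_num) (by norm_num) (by norm_num) (by norm_num) (by norm_num) (by norm_num)
    (by norm_num)
  have t1 := gammaRatioSeries_thomae (a := 1 / 8) (b := 3 / 4) (e := 3 / 8) (by norm_num)
    (by norm_num) (by norm_num) (by norm_num) (by norm_num)
  have t5 := gammaRatioSeries_thomae (a := 5 / 8) (b := 3 / 4) (e := 7 / 8) (by norm_num)
    (by norm_num) (by norm_num) (by norm_num) (by norm_num)
  rw [show (1 : ℝ) - 3 / 4 = 1 / 4 by norm_num] at t1 t5
  rw [s1, c1, s5] at e1
  rw [s3, c3, s7] at e3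
  rw [s5, c5, s1] at e5
  rw [s7, c7, s3] at e7
  have hS : 0 < Real.sin (Real.pi / 8) :=
    Real.sin_pos_of_pos_of_lt_pi (by linarith) (by linarith)
  have hC : 0 < Real.cos (Real.pi / 8) :=
    Real.cos_pos_of_mem_Ioo ⟨by linarith, by linarith⟩
  have h2 : √2 * √2 = 2 := Real.mul_self_sqrt (by norm_num)
  have hcs : Real.cos (Real.pi / 8) = (1 + √2) * Real.sin (Real.pi / 8) := by
    have d1 := Real.sin_two_mul (Real.pi / 8)
    have d2 := Real.cos_two_mul (Real.pi / 8)
    rw [show 2 * (Real.pi / 8) = Real.pi / 4 by ring] at d1 d2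
    rw [Real.sin_pi_div_four] at d1
    rw [Real.cos_pi_div_four] at d2
    refine mul_right_cancel₀ hC.ne' ?_
    linear_combination (-1 / 2 : ℝ) * d2 + (1 + √2) / 2 * d1 - h2 / 4
  have k1 : 0 < Real.Gamma (1 / 8) := Real.Gamma_pos_of_pos (by norm_num)
  have k3 : 0 < Real.Gamma (3 / 8) := Real.Gamma_pos_of_pos (by norm_num)
  have k5 : 0 < Real.Gamma (5 / 8) := Real.Gamma_pos_of_pos (by norm_num)
  have k7 : 0 < Real.Gamma (7 / 8) := Real.Gamma_pos_of_pos (by norm_num)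
  have l1 : 0 < Real.Gamma (1 / 4) := Real.Gamma_pos_of_pos (by norm_num)
  have l3 : 0 < Real.Gamma (3 / 4) := Real.Gamma_pos_of_pos (by norm_num)
  clear s1 c1 s3 c3 s5 c5 s7 c7
  generalize Real.sin (Real.pi / 8) = S at *
  generalize Real.cos (Real.pi / 8) = C at *
  generalize gammaRatioSeries (1 / 8) (3 / 4) = X1 at *
  generalize gammaRatioSeries (3 / 8) (1 / 4) = X3 at *
  generalize gammaRatioSeries (5 / 8) (3 / 4) = X5 at *
  generalize gammaRatioSeries (7 / 8) (1 / 4) = X7 at *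
  generalize betaSeries (1 / 8) (3 / 4) = G1 at *
  generalize betaSeries (3 / 8) (1 / 4) = GA at *
  generalize betaSeries (5 / 8) (3 / 4) = GC at *
  generalize betaSeries (7 / 8) (1 / 4) = GE at *
  generalize Real.Gamma (1 / 8) = g1 at *
  generalize Real.Gamma (3 / 8) = g3 at *
  generalize Real.Gamma (5 / 8) = g5 at *
  generalize Real.Gamma (7 / 8) = g7 at *
  generalize Real.Gamma (1 / 4) = q1 at *
  generalize Real.Gamma (3 / 4) = q3 at *
  have u1 : C * (G1 + GC) = √2 * S * (GA + GE) := by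
    refine mul_right_cancel₀ (by positivity : q1 * g3 ^ 2 * C ≠ 0) ?_
    linear_combination S * C * t1 - q1 * g3 ^ 2 * C * e1 + q3 * g1 ^ 2 * S * e3 +
      S * (GA + GE) * hg
  have u2 : S * (G1 - GC) = √2 * C * (GA - GE) := by
    have v1 : S * g1 * g7 = C * g3 * g5 := by linarith
    refine mul_right_cancel₀ (by positivity : q1 * g3 ^ 2 * (S * g1 * g7) ^ 2 ≠ 0) ?_
    linear_combination -S ^ 2 * q1 * g3 ^ 2 * g1 ^ 2 * g7 ^ 2 * e5 +
      S ^ 2 * C * g3 ^ 2 * g1 ^ 2 * t5 + S * C * g3 ^ 2 * g1 ^ 2 * q3 * g5 ^ 2 * e7 -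
      S * g1 ^ 2 * q3 * (GA - GE) * (C * g3 * g5 + S * g1 * g7) * v1 +
      (GA - GE) * (S * g1 * g7) ^ 2 * hg
  rw [hcs] at u1 u2
  have w1 : (1 + √2) * (G1 + GC) = √2 * (GA + GE) :=
    mul_left_cancel₀ hS.ne' (by linear_combination u1)
  have w2 : G1 - GC = √2 * (1 + √2) * (GA - GE) :=
    mul_left_cancel₀ hS.ne' (by linear_combination u2)
  have p1 : GA + GE = (1 + √2 / 2) * (G1 + GC) := by
    linear_combination -√2 / 2 * w1 - (GA + GE - (G1 + GC)) / 2 * h2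
  have p2 : GA - GE = (1 - √2 / 2) * (G1 - GC) := by
    linear_combination -(1 - √2 / 2) * w2 + (GA - GE) * (√2 - 1) / 2 * h2
  have p3 : √2 * G1 = √2 * GA - GC := by
    linear_combination -√2 / 2 * (p1 + p2) - GC / 2 * h2
  exact ⟨p3, by linear_combination p1 - p2 + p3⟩

theorem Fval_eq_betaSeries {r s : ℚ} (hr : 0 < r) (hs : r < s) :
    Fval r s = (2 : ℝ) ^ (1 - 4 * (r : ℝ)) / (2 * (r.den : ℝ)) * betaSeries r (s - r) := by
  rw [Fval, ← betaFn_mul_threeF2 (by exact_mod_cast hr) (by exact_mod_cast hs)]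
  ring

theorem Fval_class7 :
    Fval (1 / 8) (7 / 8) = √2 / 16 * betaSeries (1 / 8) (3 / 4) ∧
    Fval (7 / 8) (9 / 8) = √2 / 128 * betaSeries (7 / 8) (1 / 4) ∧
    Fval (3 / 8) (5 / 8) = √2 / 32 * betaSeries (3 / 8) (1 / 4) ∧
    Fval (5 / 8) (11 / 8) = √2 / 64 * betaSeries (5 / 8) (3 / 4) := by
  have d1 : (1 / 8 : ℚ).den = 8 := by norm_num
  have d3 : (3 / 8 : ℚ).den = 8 := by norm_num
  have d5 : (5 / 8 : ℚ).den = 8 := by norm_num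
  have d7 : (7 / 8 : ℚ).den = 8 := by norm_num
  have hpow : ∀ j : ℕ, (2 : ℝ) ^ (1 / 2 - j : ℝ) = √2 / 2 ^ j := fun j => by
    rw [Real.rpow_sub two_pos, ← Real.sqrt_eq_rpow, Real.rpow_natCast]
  have p1 := hpow 0
  have p3 := hpow 1
  have p5 := hpow 2
  have p7 := hpow 3
  norm_num only [Nat.cast_ofNat] at p1 p3 p5 p7
  rw [Fval_eq_betaSeries (by norm_num) (by norm_num),
    Fval_eq_betaSeries (by norm_num) (by norm_num),
    Fval_eq_betaSeries (by norm_num) (by norm_num), Fval_eq_betaSeries (by norm_num) (by norm_num),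
    d1, d3, d5, d7]
  push_cast
  norm_num only
  rw [p1, p3, p5, p7]
  refine ⟨?_, ?_, ?_, ?_⟩ <;> ring

open Complex in
/-- F(1/8,7/8) + 8i√2·F(7/8,9/8) = ζ₈·(2√2·F(3/8,5/8) + 4i·F(5/8,11/8)),
where ζ₈ = e^{2πi/8}. -/
theorem three_term_class7 :
    (Fval (1/8) (7/8) : ℂ) + 8 * I * (Real.sqrt 2 : ℂ) * (Fval (7/8) (9/8) : ℂ) =
      Complex.exp (2 * (Real.pi : ℂ) * I / 8) *
        (2 * (Real.sqrt 2 : ℂ) * (Fval (3/8) (5/8) : ℂ) +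
          4 * I * (Fval (5/8) (11/8) : ℂ)) := by
  obtain ⟨f1, f7, f3, f5⟩ := Fval_class7
  obtain ⟨r1, r7⟩ := betaSeries_relations
  have h2 : √2 * √2 = 2 := Real.mul_self_sqrt (by norm_num)
  have hz : Complex.exp (2 * (Real.pi : ℂ) * I / 8) = ((√2 / 2 : ℝ) : ℂ) * (1 + I) := by
    rw [show 2 * (Real.pi : ℂ) * I / 8 = ((Real.pi / 4 : ℝ) : ℂ) * I by push_cast; ring,
      Complex.exp_mul_I, ← Complex.ofReal_cos, ← Complex.ofReal_sin, Real.cos_pi_div_four,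
      Real.sin_pi_div_four]
    ring
  have hre : Fval (1 / 8) (7 / 8) = 2 * Fval (3 / 8) (5 / 8) - 2 * √2 * Fval (5 / 8) (11 / 8) := by
    rw [f1, f3, f5]
    linear_combination r1 / 16 + betaSeries (5 / 8) (3 / 4) / 32 * h2
  have him : 8 * √2 * Fval (7 / 8) (9 / 8) =
      2 * Fval (3 / 8) (5 / 8) + 2 * √2 * Fval (5 / 8) (11 / 8) := by
    rw [f7, f3, f5]
    linear_combination r7 / 16 +
      (betaSeries (7 / 8) (1 / 4) / 16 - betaSeries (5 / 8) (3 / 4) / 32) * h2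
  have hre' := congrArg ((↑) : ℝ → ℂ) hre
  have him' := congrArg ((↑) : ℝ → ℂ) him
  have h2' := congrArg ((↑) : ℝ → ℂ) h2
  push_cast at hre' him' h2'
  rw [hz]
  push_cast
  linear_combination hre' + I * him' - (1 + I) * (Fval (3 / 8) (5 / 8) : ℂ) * h2' -
    2 * (√2 : ℂ) * (Fval (5 / 8) (11 / 8) : ℂ) * I_sq
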